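/- Let λ₁ and λ₂ be Dyck words of semilengths n₁ and n₂ respectively, and let λ := λ₁λ₂ be their concatenation (a Dyck word of semilength n₁+n₂). Then the LS generating polynomials satisfy P_λ = [n₁+n₂ choose n₁] · P_{λ₁} · P_{λ₂} in ℤ[q]. -/

import Mathlib

/-!
Dyck words, chords, nesting, capacities and Lascoux–Schützenberger labellings.
A step is a `Bool`: `true` = U (up), `false` = D (down).
-/

open scoped BigOperators Classical

noncomputable section

/-- The height (#U − #D) of the prefix of length `k`. -/
def heightAt (l : List Bool) (k : ℕ) : ℤ :=
  ((l.take k).count true : ℤ) - ((l.take k).count false : ℤ)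

/-- `l` is a Dyck word: equally many U's and D's, and every prefix has at least
as many U's as D's. -/
def IsDyckWord (l : List Bool) : Prop :=
  l.count true = l.count false ∧
    ∀ k, (l.take k).count false ≤ (l.take k).count true

/-- `(i,j)` is a chord of `l` (0-indexed matched pair of a U at `i` and a D at `j`
under the standard parenthesis matching). -/
def IsChord (l : List Bool) (i j : ℕ) : Prop :=
  i < j ∧ j < l.length ∧ l.getD i false = true ∧ l.getD j true = false ∧
    heightAt l (j + 1) = heightAt l i ∧
    ∀ k ∈ Finset.Icc (i + 1) j, heightAt l i < heightAt l k

/-- The finset of chords of `l`. -/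
def chords (l : List Bool) : Finset (ℕ × ℕ) :=
  (Finset.range l.length ×ˢ Finset.range l.length).filter fun p => IsChord l p.1 p.2

/-- `c' = (i',j')` is nested in `c = (i,j)` iff `i < i' < j' < j`. -/
def NestedIn (c' c : ℕ × ℕ) : Prop :=
  c.1 < c'.1 ∧ c'.1 < c'.2 ∧ c'.2 < c.2

/-- The length `l(c)` of a chord: one plus the number of chords nested in it. -/
def chordLen (l : List Bool) (c : ℕ × ℕ) : ℕ :=
  1 + ((chords l).filter fun c' => NestedIn c' c).card

/-- The capacity of a chord: the number of D's strictly before its opening position. -/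
def cap (l : List Bool) (c : ℕ × ℕ) : ℕ := (l.take c.1).count false

/-- LS-labellings of `l`: functions on chords (encoded as functions on `ℕ × ℕ`
vanishing off the chords) which weakly increase under nesting and are bounded by
the capacity on leaf chords. -/
def LSLabellings (l : List Bool) : Set ((ℕ × ℕ) → ℕ) :=
  {f | (∀ c, c ∉ chords l → f c = 0) ∧
       (∀ c ∈ chords l, ∀ c' ∈ chords l, NestedIn c' c → f c ≤ f c') ∧
       (∀ c ∈ chords l, (∀ c' ∈ chords l, ¬ NestedIn c' c) → f c ≤ cap l c)}


/-- The field ℚ(q). -/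
abbrev K : Type := RatFunc ℚ

/-- The variable q. -/
def qq : K := RatFunc.X

/-- The quantum integer [n] = 1 + q + ⋯ + q^{n-1}. -/
def qint (n : ℕ) : K := ∑ i ∈ Finset.range n, qq ^ i

/-- The quantum factorial [n]! = [1][2]⋯[n]. -/
def qfact (n : ℕ) : K := ∏ i ∈ Finset.range n, qint (i + 1)

/-- The Gaussian binomial coefficient [n choose k] = [n]!/([k]!·[n-k]!). -/
def qbinom (n k : ℕ) : K :=
  if k ≤ n then qfact n / (qfact k * qfact (n - k)) else 0

/-- The LS generating polynomial P_λ = Σ_f q^{Σ_c f(c)}, summed over all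
LS-labellings f of λ, viewed in ℚ(q). -/
def PLSK (l : List Bool) : K :=
  ∑ᶠ f ∈ LSLabellings l, qq ^ (∑ c ∈ chords l, f c)


/-! ## Basic lemmas -/

theorem ls_mem_chords (l : List Bool) (i j : ℕ) : (i, j) ∈ chords l ↔ IsChord l i j := by
  unfold chords
  simp only [Finset.mem_filter, Finset.mem_product, Finset.mem_range]
  constructor
  · exact fun h => h.2
  · intro h
    have h1 := h.1
    have h2 := h.2.1
    exact ⟨⟨by omega, h2⟩, h⟩

theorem ls_height_append_left (l1 l2 : List Bool) (k : ℕ) (hk : k ≤ l1.length) :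
    heightAt (l1 ++ l2) k = heightAt l1 k := by
  unfold heightAt
  rw [List.take_append_of_le_length hk]

theorem ls_height_append_right (l1 l2 : List Bool) (h : l1.count true = l1.count false) (k : ℕ) :
    heightAt (l1 ++ l2) (k + l1.length) = heightAt l2 k := by
  unfold heightAt
  rw [add_comm k, List.take_length_add_append]
  simp [h]

theorem ls_height_nonneg {l : List Bool} (h : IsDyckWord l) (k : ℕ) : 0 ≤ heightAt l k := by
  have := h.2 k
  unfold heightAt
  omega

theorem ls_chord_append_left (l1 l2 : List Bool) (h : IsDyckWord l1) (i j : ℕ)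
    (hi : i < l1.length) : IsChord (l1 ++ l2) i j ↔ IsChord l1 i j := by
  have key : IsChord (l1 ++ l2) i j → j < l1.length := by
    intro hc
    by_contra hj
    have h6 := hc.2.2.2.2.2 l1.length (by simp; omega)
    have e := ls_height_append_right l1 l2 h.1 0
    rw [ls_height_append_left _ _ _ hi.le] at h6
    have := ls_height_nonneg h i
    simp [heightAt] at e h6 this
    omega
  have main : j < l1.length → (IsChord (l1 ++ l2) i j ↔ IsChord l1 i j) := by
    intro hj
    unfold IsChord
    rw [List.getD_append _ _ _ _ hi, List.getD_append _ _ _ _ hj,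
      ls_height_append_left _ _ _ hi.le, ls_height_append_left _ _ (j+1) hj]
    have : (∀ k ∈ Finset.Icc (i+1) j, heightAt l1 i < heightAt (l1 ++ l2) k) ↔
        ∀ k ∈ Finset.Icc (i+1) j, heightAt l1 i < heightAt l1 k := by
      refine forall₂_congr fun k hk => ?_
      rw [ls_height_append_left]
      simp at hk; omega
    rw [this]
    simp only [List.length_append]
    have e1 : j < l1.length + l2.length := by omega
    simp [hj, e1]
  exact ⟨fun hc => (main (key hc)).1 hc, fun hc => (main hc.2.1).2 hc⟩

theorem ls_forall_shift (a i j : ℕ) (P : ℕ → Prop) :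
    (∀ k ∈ Finset.Icc (i + a + 1) (j + a), P k) ↔ ∀ k ∈ Finset.Icc (i + 1) j, P (k + a) := by
  simp only [Finset.mem_Icc]
  constructor
  · intro h k hk
    exact h _ (by omega)
  · intro h k hk
    have := h (k - a) (by omega)
    rwa [Nat.sub_add_cancel (by omega)] at this

theorem ls_chord_append_right (l1 l2 : List Bool) (h : IsDyckWord l1) (i j : ℕ) :
    IsChord (l1 ++ l2) (i + l1.length) (j + l1.length) ↔ IsChord l2 i j := by
  unfold IsChord
  rw [ls_forall_shift]
  simp only [ls_height_append_right _ _ h.1, show j + l1.length + 1 = (j + 1) + l1.length by ring]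
  rw [List.getD_append_right _ _ _ _ (by omega), List.getD_append_right _ _ _ _ (by omega)]
  simp only [Nat.add_sub_cancel, List.length_append]
  have e1 : i + l1.length < j + l1.length ↔ i < j := by omega
  have e2 : j + l1.length < l1.length + l2.length ↔ j < l2.length := by omega
  rw [e1, e2]

/-- nested word -/
def lsNest (l : List Bool) : List Bool := true :: (l ++ [false])

theorem ls_height_nest (l : List Bool) (k : ℕ) (hk : k ≤ l.length) :
    heightAt (lsNest l) (k + 1) = heightAt l k + 1 := by
  unfold heightAt lsNest
  rw [List.take_succ_cons, List.take_append_of_le_length hk]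
  simp
  ring

theorem ls_height_nest_end (l : List Bool) (h : IsDyckWord l) :
    heightAt (lsNest l) (l.length + 2) = 0 := by
  unfold heightAt lsNest
  rw [List.take_of_length_le (by simp)]
  simp [h.1]

theorem ls_nest_dyck (l : List Bool) (h : IsDyckWord l) : IsDyckWord (lsNest l) := by
  refine ⟨by simp [lsNest, h.1], ?_⟩
  intro k
  have : 0 ≤ heightAt (lsNest l) k := by
    rcases k with _ | k
    · simp [heightAt]
    · by_cases hk : k ≤ l.length
      · rw [ls_height_nest _ _ hk]
        have := ls_height_nonneg h k
        omega
      · have e : heightAt (lsNest l) (k + 1) = heightAt (lsNest l) (l.length + 2) := by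
          unfold heightAt
          rw [List.take_of_length_le (by simp [lsNest]; omega),
            List.take_of_length_le (by simp [lsNest])]
        rw [e, ls_height_nest_end l h]
  unfold heightAt at this
  omega

theorem ls_chord_nest_zero (l : List Bool) (h : IsDyckWord l) (j : ℕ) :
    IsChord (lsNest l) 0 j ↔ j = l.length + 1 := by
  have h0 : heightAt (lsNest l) 0 = 0 := by simp [heightAt]
  constructor
  · intro hc
    have h2 : j < l.length + 2 := by have := hc.2.1; simp [lsNest] at this; omega
    by_contra hj
    have h5 := hc.2.2.2.2.1
    rw [h0, ls_height_nest _ _ (by omega)] at h5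
    have := ls_height_nonneg h j
    omega
  · rintro rfl
    refine ⟨by omega, by simp [lsNest], by simp [lsNest], ?_, ?_, ?_⟩
    · simp [lsNest]
    · rw [ls_height_nest_end l h, h0]
    · intro k hk
      simp only [Finset.mem_Icc] at hk
      obtain ⟨k, rfl⟩ : ∃ k', k = k' + 1 := ⟨k - 1, by omega⟩
      rw [h0, ls_height_nest _ _ (by omega)]
      have := ls_height_nonneg h k
      omega

theorem ls_chord_nest_succ (l : List Bool) (h : IsDyckWord l) (i j : ℕ) :
    IsChord (lsNest l) (i + 1) (j + 1) ↔ IsChord l i j := by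
  have key : IsChord (lsNest l) (i + 1) (j + 1) → j < l.length := by
    intro hc
    have h2 : j < l.length + 1 := by have := hc.2.1; simpa [lsNest] using this
    by_contra hj
    have hj : j = l.length := by omega
    have h5 := hc.2.2.2.2.1
    have h1 := hc.1
    rw [hj, ls_height_nest_end l h, ls_height_nest _ _ (by omega)] at h5
    have := ls_height_nonneg h i
    omega
  have main : i < l.length → j < l.length → (IsChord (lsNest l) (i + 1) (j + 1) ↔ IsChord l i j) := by
    intro hi hj
    unfold IsChord
    rw [ls_forall_shift]
    have e3 : (∀ k ∈ Finset.Icc (i+1) j, heightAt (lsNest l) (i+1) < heightAt (lsNest l) (k+1)) ↔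
        ∀ k ∈ Finset.Icc (i+1) j, heightAt l i < heightAt l k := by
      refine forall₂_congr fun k hk => ?_
      simp at hk
      rw [ls_height_nest _ _ hi.le, ls_height_nest _ _ (by omega)]
      omega
    rw [e3, ls_height_nest _ _ hi.le, ls_height_nest _ (j+1) hj]
    have e4 : (lsNest l).getD (i+1) false = l.getD i false := by
      unfold lsNest
      rw [List.getD_cons_succ, List.getD_append _ _ _ _ hi]
    have e5 : (lsNest l).getD (j+1) true = l.getD j true := by
      unfold lsNest
      rw [List.getD_cons_succ, List.getD_append _ _ _ _ hj]
    have e2 : j + 1 < (lsNest l).length := by simp [lsNest]; omega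
    rw [e4, e5]
    simp [e2, hj]
  constructor
  · intro hc
    have hj := key hc
    have := hc.1
    exact (main (by omega) hj).1 hc
  · intro hc
    have h1 := hc.1
    have h2 := hc.2.1
    exact (main (by omega) h2).2 hc

/-- Induction along the first-return decomposition. -/
theorem ls_dyck_induction (P : List Bool → Prop) (h0 : P [])
    (hs : ∀ l1 l2, IsDyckWord l1 → IsDyckWord l2 → P l1 → P l2 → P (lsNest l1 ++ l2))
    (l : List Bool) (hl : IsDyckWord l) : P l := by
  let g : DyckStep → Bool := fun s => match s with | .U => true | .D => false
  let g' : Bool → DyckStep := fun b => match b with | true => .U | false => .D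
  have gi : Function.Injective g := by intro a b; cases a <;> cases b <;> simp [g]
  have gi' : Function.Injective g' := by intro a b; cases a <;> cases b <;> simp [g']
  have gg : g ∘ g' = id := by funext b; cases b <;> rfl
  have dy : ∀ p : DyckWord, IsDyckWord (p.toList.map g) := by
    intro p
    refine ⟨?_, fun k => ?_⟩
    · have := p.count_U_eq_count_D
      rw [← List.count_map_of_injective _ g gi, ← List.count_map_of_injective _ g gi] at this
      exact this
    · have := p.count_D_le_count_U k
      rw [← List.count_map_of_injective _ g gi, ← List.count_map_of_injective _ g gi,
        List.map_take] at this
      exact this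
  have main : ∀ n, ∀ p : DyckWord, p.semilength = n → P (p.toList.map g) := by
    intro n
    induction n using Nat.strong_induction_on with
    | _ n ih =>
      intro p hp
      by_cases hz : p = 0
      · subst hz; exact h0
      · have a := ih _ (hp ▸ DyckWord.semilength_insidePart_lt hz) _ rfl
        have b := ih _ (hp ▸ DyckWord.semilength_outsidePart_lt hz) _ rfl
        have c := hs _ _ (dy _) (dy _) a b
        have e : [DyckStep.U] ++ p.insidePart.toList ++ [DyckStep.D] ++ p.outsidePart.toList
          = p.toList := DyckWord.ext_iff.mp (DyckWord.nest_insidePart_add_outsidePart hz)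
        rw [← e]
        simpa [lsNest, g] using c
  let p : DyckWord := ⟨l.map g', by
      have := hl.1
      rw [← List.count_map_of_injective _ g' gi', ← List.count_map_of_injective _ g' gi'] at this
      exact this, by
      intro k
      have := hl.2 k
      rw [← List.count_map_of_injective _ g' gi', ← List.count_map_of_injective _ g' gi',
        List.map_take] at this
      exact this⟩
  have := main _ p rfl
  simpa [p, gg] using this

/-- shift of a pair -/
def lsS (k : ℕ) (c : ℕ × ℕ) : ℕ × ℕ := (c.1 + k, c.2 + k)

theorem lsS_inj (k : ℕ) : Function.Injective (lsS k) := by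
  rintro ⟨a, b⟩ ⟨c, d⟩ h
  simp [lsS] at h ⊢
  exact h

theorem lsS_nested (k : ℕ) (c c' : ℕ × ℕ) : NestedIn (lsS k c) (lsS k c') ↔ NestedIn c c' := by
  simp [NestedIn, lsS]

theorem ls_chord_lt {l : List Bool} {c : ℕ × ℕ} (h : c ∈ chords l) : c.1 < c.2 ∧ c.2 < l.length := by
  have := (ls_mem_chords l c.1 c.2).1 h
  exact ⟨this.1, this.2.1⟩

theorem ls_chords_append (l1 l2 : List Bool) (h : IsDyckWord l1) :
    chords (l1 ++ l2) = chords l1 ∪ (chords l2).image (lsS l1.length) := by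
  ext ⟨i, j⟩
  simp only [Finset.mem_union, Finset.mem_image]
  constructor
  · intro hc
    have hij := (ls_chord_lt hc).1
    simp only at hij
    rw [ls_mem_chords] at hc
    by_cases hi : i < l1.length
    · left
      rw [ls_mem_chords]
      exact (ls_chord_append_left l1 l2 h i j hi).1 hc
    · right
      refine ⟨(i - l1.length, j - l1.length), ?_, ?_⟩
      · rw [ls_mem_chords, ← ls_chord_append_right l1 l2 h, Nat.sub_add_cancel (by omega),
          Nat.sub_add_cancel (by omega)]
        exact hc
      · simp [lsS]; omega
  · rintro (hc | ⟨⟨a, b⟩, hc, he⟩)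
    · have hij := ls_chord_lt hc
      simp only at hij
      rw [ls_mem_chords] at hc ⊢
      exact (ls_chord_append_left l1 l2 h i j (by omega)).2 hc
    · rw [← he]
      simp only [lsS]
      rw [ls_mem_chords] at hc ⊢
      exact (ls_chord_append_right l1 l2 h a b).2 hc

theorem ls_chords_nest (l : List Bool) (h : IsDyckWord l) :
    chords (lsNest l) = insert (0, l.length + 1) ((chords l).image (lsS 1)) := by
  ext ⟨i, j⟩
  simp only [Finset.mem_insert, Finset.mem_image]
  constructor
  · intro hc
    have hij := (ls_chord_lt hc).1
    simp only at hij
    rw [ls_mem_chords] at hc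
    rcases i with _ | i
    · left
      rw [(ls_chord_nest_zero l h j).1 hc]
    · right
      obtain ⟨j, rfl⟩ : ∃ j', j = j' + 1 := ⟨j - 1, by omega⟩
      exact ⟨(i, j), (ls_mem_chords _ _ _).2 ((ls_chord_nest_succ l h i j).1 hc), rfl⟩
  · rintro (hc | ⟨⟨a, b⟩, hc, he⟩)
    · rw [hc, ls_mem_chords, ls_chord_nest_zero l h]
    · rw [← he]
      simp only [lsS]
      rw [ls_mem_chords] at hc ⊢
      exact (ls_chord_nest_succ l h a b).2 hc

theorem ls_disj_append (l1 l2 : List Bool) :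
    Disjoint (chords l1) ((chords l2).image (lsS l1.length)) := by
  rw [Finset.disjoint_left]
  intro c hc hc'
  obtain ⟨d, hd, rfl⟩ := Finset.mem_image.1 hc'
  have := ls_chord_lt hc
  simp [lsS] at this

theorem ls_notMem_nest (l : List Bool) : (0, l.length + 1) ∉ (chords l).image (lsS 1) := by
  intro hc'
  obtain ⟨d, hd, he⟩ := Finset.mem_image.1 hc'
  simp [lsS] at he

theorem ls_card_append (l1 l2 : List Bool) (h : IsDyckWord l1) :
    (chords (l1 ++ l2)).card = (chords l1).card + (chords l2).card := by
  rw [ls_chords_append l1 l2 h, Finset.card_union_of_disjoint (ls_disj_append l1 l2),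
    Finset.card_image_of_injective _ (lsS_inj _)]

theorem ls_card_nest (l : List Bool) (h : IsDyckWord l) :
    (chords (lsNest l)).card = (chords l).card + 1 := by
  rw [ls_chords_nest l h, Finset.card_insert_of_notMem (ls_notMem_nest l),
    Finset.card_image_of_injective _ (lsS_inj _)]

theorem ls_cap_append_left (l1 l2 : List Bool) (c : ℕ × ℕ) (h : c.1 ≤ l1.length) :
    cap (l1 ++ l2) c = cap l1 c := by
  unfold cap
  rw [List.take_append_of_le_length h]

theorem ls_cap_append_right (l1 l2 : List Bool) (c : ℕ × ℕ) :
    cap (l1 ++ l2) (lsS l1.length c) = cap l2 c + l1.count false := by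
  unfold cap lsS
  simp only
  rw [add_comm c.1, List.take_length_add_append, List.count_append, add_comm]

theorem ls_cap_nest (l : List Bool) (c : ℕ × ℕ) (h : c.1 ≤ l.length) :
    cap (lsNest l) (lsS 1 c) = cap l c := by
  unfold cap lsS lsNest
  simp only
  rw [List.take_succ_cons, List.take_append_of_le_length h]
  simp

/-- labellings with capacities raised by `m` -/
def lsLab (l : List Bool) (m : ℕ) : Set ((ℕ × ℕ) → ℕ) :=
  {f | (∀ c, c ∉ chords l → f c = 0) ∧
       (∀ c ∈ chords l, ∀ c' ∈ chords l, NestedIn c' c → f c ≤ f c') ∧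
       (∀ c ∈ chords l, (∀ c' ∈ chords l, ¬ NestedIn c' c) → f c ≤ cap l c + m)}

/-- raised generating function -/
def lsQ (l : List Bool) (m : ℕ) : K := ∑ᶠ f ∈ lsLab l m, qq ^ (∑ c ∈ chords l, f c)

theorem lsQ_zero (l : List Bool) : PLSK l = lsQ l 0 := rfl

/-- gluing -/
def lsE (k : ℕ) (p : ((ℕ × ℕ) → ℕ) × ((ℕ × ℕ) → ℕ)) : (ℕ × ℕ) → ℕ := fun c =>
  if c.1 < k then p.1 c else if c.2 < k then 0 else p.2 (c.1 - k, c.2 - k)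

theorem lsE_right (k : ℕ) (p) (c : ℕ × ℕ) : lsE k p (lsS k c) = p.2 c := by
  simp [lsE, lsS]

theorem lsE_left (k : ℕ) (p) (c : ℕ × ℕ) (h : c.1 < k) : lsE k p c = p.1 c := by
  simp [lsE, h]

theorem ls_bij_append (l1 l2 : List Bool) (h : IsDyckWord l1) (m : ℕ) :
    Set.BijOn (lsE l1.length) (lsLab l1 m ×ˢ lsLab l2 (m + l1.count false))
      (lsLab (l1 ++ l2) m) := by
  have memL : ∀ c ∈ chords l1, c ∈ chords (l1 ++ l2) := fun c hc => by
    rw [ls_chords_append l1 l2 h]; exact Finset.mem_union_left _ hc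
  have memR : ∀ c ∈ chords l2, lsS l1.length c ∈ chords (l1 ++ l2) := fun c hc => by
    rw [ls_chords_append l1 l2 h]
    exact Finset.mem_union_right _ (Finset.mem_image_of_mem _ hc)
  have cas : ∀ c ∈ chords (l1 ++ l2), c ∈ chords l1 ∨ ∃ d ∈ chords l2, lsS l1.length d = c := by
    intro c hc
    rw [ls_chords_append l1 l2 h] at hc
    simpa using hc
  have nn1 : ∀ c ∈ chords l1, ∀ d, ¬ NestedIn (lsS l1.length d) c := by
    intro c hc d hn
    have := ls_chord_lt hc
    simp [NestedIn, lsS] at hn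
    omega
  have nn2 : ∀ c ∈ chords l1, ∀ d, ¬ NestedIn c (lsS l1.length d) := by
    intro c hc d hn
    have := ls_chord_lt hc
    simp [NestedIn, lsS] at hn
    omega
  have lt1 : ∀ c ∈ chords l1, c.1 < l1.length := fun c hc => by
    have := ls_chord_lt hc
    omega
  refine ⟨?_, ?_, ?_⟩
  · rintro ⟨f1, f2⟩ ⟨h1, h2⟩
    simp only at h1 h2
    refine ⟨?_, ?_, ?_⟩
    · intro c hc
      unfold lsE
      split_ifs with ha hb
      · exact h1.1 c fun hh => hc (memL c hh)
      · rfl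
      · refine h2.1 _ fun hh => hc ?_
        have := memR _ hh
        simpa [lsS, Nat.sub_add_cancel (not_lt.1 ha), Nat.sub_add_cancel (not_lt.1 hb)] using this
    · intro c hc c' hc' hn
      rcases cas c hc with hc | ⟨d, hd, rfl⟩ <;> rcases cas c' hc' with hc' | ⟨d', hd', rfl⟩
      · rw [lsE_left _ _ _ (lt1 c hc), lsE_left _ _ _ (lt1 c' hc')]
        exact h1.2.1 c hc c' hc' hn
      · exact absurd hn (nn1 c hc _)
      · exact absurd hn (nn2 c' hc' _)
      · rw [lsE_right, lsE_right]
        exact h2.2.1 d hd d' hd' ((lsS_nested _ _ _).1 hn)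
    · intro c hc hleaf
      rcases cas c hc with hc | ⟨d, hd, rfl⟩
      · rw [lsE_left _ _ _ (lt1 c hc), ls_cap_append_left _ _ _ (lt1 c hc).le]
        exact h1.2.2 c hc fun c' hc' => hleaf c' (memL c' hc')
      · rw [lsE_right, ls_cap_append_right]
        have := h2.2.2 d hd fun c' hc' hn => hleaf _ (memR c' hc') ((lsS_nested _ _ _).2 hn)
        simp only
        omega
  · rintro ⟨f1, f2⟩ ⟨h1, h2⟩ ⟨g1, g2⟩ ⟨k1, k2⟩ he
    simp only at h1 h2 k1 k2
    have e1 : f1 = g1 := by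
      funext c
      by_cases hc : c ∈ chords l1
      · have := congrFun he c
        rwa [lsE_left _ _ _ (lt1 c hc), lsE_left _ _ _ (lt1 c hc)] at this
      · rw [h1.1 c hc, k1.1 c hc]
    have e2 : f2 = g2 := by
      funext c
      have := congrFun he (lsS l1.length c)
      rwa [lsE_right, lsE_right] at this
    rw [e1, e2]
  · intro f hf
    refine ⟨(fun c => if c ∈ chords l1 then f c else 0, fun c => f (lsS l1.length c)),
      ⟨⟨?_, ?_, ?_⟩, ⟨?_, ?_, ?_⟩⟩, ?_⟩
    · intro c hc
      simp [hc]
    · intro c hc c' hc' hn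
      simp only [hc, hc', if_true]
      exact hf.2.1 c (memL c hc) c' (memL c' hc') hn
    · intro c hc hleaf
      simp only [hc, if_true]
      rw [← ls_cap_append_left l1 l2 _ (lt1 c hc).le]
      refine hf.2.2 c (memL c hc) ?_
      intro c' hc' hn
      rcases cas c' hc' with hc' | ⟨d', hd', rfl⟩
      · exact hleaf c' hc' hn
      · exact nn1 c hc _ hn
    · intro c hc
      refine hf.1 _ fun hh => ?_
      rcases cas _ hh with hh | ⟨d', hd', he⟩
      · have := lt1 _ hh
        simp [lsS] at this
      · rw [lsS_inj _ he] at hd'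
        exact hc hd'
    · intro c hc c' hc' hn
      exact hf.2.1 _ (memR c hc) _ (memR c' hc') ((lsS_nested _ _ _).2 hn)
    · intro c hc hleaf
      have := hf.2.2 _ (memR c hc) (by
        intro c' hc' hn
        rcases cas c' hc' with hc' | ⟨d', hd', rfl⟩
        · exact nn2 c' hc' _ hn
        · exact hleaf d' hd' ((lsS_nested _ _ _).1 hn))
      rw [ls_cap_append_right] at this
      simp only
      omega
    · funext c
      by_cases hc : c ∈ chords (l1 ++ l2)
      · rcases cas c hc with hc | ⟨d, hd, rfl⟩
        · rw [lsE_left _ _ _ (lt1 c hc)]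
          simp [hc]
        · rw [lsE_right]
      · rw [hf.1 c hc]
        unfold lsE
        split_ifs with ha hb
        · have : c ∉ chords l1 := fun hh => hc (memL c hh)
          simp [this]
        · rfl
        · simpa [lsS, Nat.sub_add_cancel (not_lt.1 ha), Nat.sub_add_cancel (not_lt.1 hb)]
            using hf.1 c hc

theorem ls_finite_append (l1 l2 : List Bool) (h : IsDyckWord l1)
    (f1 : ∀ m, (lsLab l1 m).Finite) (f2 : ∀ m, (lsLab l2 m).Finite) (m : ℕ) :
    (lsLab (l1 ++ l2) m).Finite := by
  rw [← (ls_bij_append l1 l2 h m).image_eq]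
  exact ((f1 m).prod (f2 _)).image _

theorem lsQ_append (l1 l2 : List Bool) (h : IsDyckWord l1)
    (f1 : ∀ m, (lsLab l1 m).Finite) (f2 : ∀ m, (lsLab l2 m).Finite) (m : ℕ) :
    lsQ (l1 ++ l2) m = lsQ l1 m * lsQ l2 (m + l1.count false) := by
  have e := finsum_mem_eq_of_bijOn (lsE l1.length) (ls_bij_append l1 l2 h m)
    (f := fun p => qq ^ (∑ c ∈ chords l1, p.1 c) * qq ^ (∑ c ∈ chords l2, p.2 c))
    (g := fun f => qq ^ (∑ c ∈ chords (l1 ++ l2), f c)) (by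
      rintro ⟨g1, g2⟩ hg
      rw [ls_chords_append l1 l2 h, Finset.sum_union (ls_disj_append l1 l2),
        Finset.sum_image (fun _ _ _ _ hh => lsS_inj _ hh), pow_add]
      congr 2
      · refine Finset.sum_congr rfl fun c hc => ?_
        have := ls_chord_lt hc
        rw [lsE_left _ _ _ (by omega)]
      · refine Finset.sum_congr rfl fun c hc => ?_
        rw [lsE_right])
  unfold lsQ
  rw [← e, finsum_mem_eq_finite_toFinset_sum _ ((f1 m).prod (f2 _)),
    finsum_mem_eq_finite_toFinset_sum _ (f1 m), finsum_mem_eq_finite_toFinset_sum _ (f2 _),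
    Finset.sum_mul_sum, ← Finset.sum_product']
  refine Finset.sum_congr ?_ fun _ _ => rfl
  ext ⟨a, b⟩
  simp

/-- insertion of a zero root -/
def lsZ (f : (ℕ × ℕ) → ℕ) : (ℕ × ℕ) → ℕ := lsE 1 (fun _ => 0, f)

/-- raise by one -/
def lsR (l : List Bool) (f : (ℕ × ℕ) → ℕ) : (ℕ × ℕ) → ℕ := fun c =>
  if c ∈ chords l then f c + 1 else 0

theorem ls_bij_zero (l : List Bool) (h : IsDyckWord l) (m : ℕ) :
    Set.BijOn lsZ (lsLab l m) (lsLab (lsNest l) m ∩ {f | f (0, l.length + 1) = 0}) := by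
  have memR : ∀ c ∈ chords l, lsS 1 c ∈ chords (lsNest l) := fun c hc => by
    rw [ls_chords_nest l h]
    exact Finset.mem_insert_of_mem (Finset.mem_image_of_mem _ hc)
  have cas : ∀ c ∈ chords (lsNest l), c = (0, l.length + 1) ∨ ∃ d ∈ chords l, lsS 1 d = c := by
    intro c hc
    rw [ls_chords_nest l h] at hc
    simpa using hc
  have nn : ∀ c, ¬ NestedIn (0, l.length + 1) c := by
    intro c hn
    simp [NestedIn] at hn
  have lt1 : ∀ c ∈ chords l, c.1 ≤ l.length := fun c hc => by
    have := ls_chord_lt hc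
    omega
  have z0 : ∀ f, lsZ f (0, l.length + 1) = 0 := fun f => by simp [lsZ, lsE]
  have zS : ∀ f c, lsZ f (lsS 1 c) = f c := fun f c => lsE_right _ _ _
  refine ⟨?_, ?_, ?_⟩
  · intro f hf
    refine ⟨⟨?_, ?_, ?_⟩, z0 f⟩
    · intro c hc
      unfold lsZ lsE
      split_ifs with ha hb
      · rfl
      · rfl
      · refine hf.1 _ fun hh => hc ?_
        have := memR _ hh
        simpa [lsS, Nat.sub_add_cancel (not_lt.1 ha), Nat.sub_add_cancel (not_lt.1 hb)] using this
    · intro c hc c' hc' hn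
      rcases cas c hc with rfl | ⟨d, hd, rfl⟩
      · rw [z0]; exact Nat.zero_le _
      · rcases cas c' hc' with rfl | ⟨d', hd', rfl⟩
        · exact absurd hn (nn _)
        · rw [zS, zS]
          exact hf.2.1 d hd d' hd' ((lsS_nested _ _ _).1 hn)
    · intro c hc hleaf
      rcases cas c hc with rfl | ⟨d, hd, rfl⟩
      · rw [z0]; exact Nat.zero_le _
      · rw [zS, ls_cap_nest _ _ (lt1 d hd)]
        exact hf.2.2 d hd fun c' hc' hn => hleaf _ (memR c' hc') ((lsS_nested _ _ _).2 hn)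
  · intro f _ g _ he
    funext c
    have := congrFun he (lsS 1 c)
    rwa [zS, zS] at this
  · rintro f ⟨hf, hf0⟩
    simp only [Set.mem_ofPred_eq] at hf0
    refine ⟨fun c => f (lsS 1 c), ⟨?_, ?_, ?_⟩, ?_⟩
    · intro c hc
      refine hf.1 _ fun hh => ?_
      rcases cas _ hh with hh | ⟨d', hd', he⟩
      · simp [lsS] at hh
      · rw [lsS_inj _ he] at hd'
        exact hc hd'
    · intro c hc c' hc' hn
      exact hf.2.1 _ (memR c hc) _ (memR c' hc') ((lsS_nested _ _ _).2 hn)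
    · intro c hc hleaf
      have := hf.2.2 _ (memR c hc) (by
        intro c' hc' hn
        rcases cas c' hc' with rfl | ⟨d', hd', rfl⟩
        · exact nn _ hn
        · exact hleaf d' hd' ((lsS_nested _ _ _).1 hn))
      rwa [ls_cap_nest _ _ (lt1 c hc)] at this
    · funext c
      by_cases hc : c ∈ chords (lsNest l)
      · rcases cas c hc with rfl | ⟨d, hd, rfl⟩
        · rw [z0, hf0]
        · rw [zS]
      · rw [hf.1 c hc]
        unfold lsZ lsE
        split_ifs with ha hb
        · rfl
        · rfl
        · simpa [lsS, Nat.sub_add_cancel (not_lt.1 ha), Nat.sub_add_cancel (not_lt.1 hb)]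
            using hf.1 c hc

theorem ls_root_le (l : List Bool) (h : IsDyckWord l) (m : ℕ) (f) (hf : f ∈ lsLab (lsNest l) m)
    (c : ℕ × ℕ) (hc : c ∈ chords (lsNest l)) : f (0, l.length + 1) ≤ f c := by
  have hr : (0, l.length + 1) ∈ chords (lsNest l) := by
    rw [ls_chords_nest l h]; exact Finset.mem_insert_self _ _
  have hc0 := hc
  rw [ls_chords_nest l h] at hc
  simp only [Finset.mem_insert, Finset.mem_image] at hc
  rcases hc with rfl | ⟨d, hd, rfl⟩
  · exact le_rfl
  · refine hf.2.1 _ hr _ hc0 ?_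
    have := ls_chord_lt hd
    simp [NestedIn, lsS]
    omega

theorem ls_bij_raise (l : List Bool) (h : IsDyckWord l) (m : ℕ) :
    Set.BijOn (lsR (lsNest l)) (lsLab (lsNest l) m)
      (lsLab (lsNest l) (m + 1) ∩ {f | f (0, l.length + 1) = 0}ᶜ) := by
  have hr : (0, l.length + 1) ∈ chords (lsNest l) := by
    rw [ls_chords_nest l h]; exact Finset.mem_insert_self _ _
  refine ⟨?_, ?_, ?_⟩
  · intro f hf
    refine ⟨⟨?_, ?_, ?_⟩, by simp [lsR, hr]⟩
    · intro c hc
      simp [lsR, hc]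
    · intro c hc c' hc' hn
      have := hf.2.1 c hc c' hc' hn
      simp [lsR, hc, hc', this]
    · intro c hc hl
      have := hf.2.2 c hc hl
      simp only [lsR, hc, if_true]
      omega
  · intro f hf g hg he
    funext c
    by_cases hc : c ∈ chords (lsNest l)
    · have := congrFun he c
      simpa [lsR, hc] using this
    · rw [hf.1 c hc, hg.1 c hc]
  · rintro f ⟨hf, hf0⟩
    simp only [Set.mem_compl_iff, Set.mem_ofPred_eq] at hf0
    refine ⟨fun c => f c - 1, ⟨?_, ?_, ?_⟩, ?_⟩
    · intro c hc
      simp [hf.1 c hc]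
    · intro c hc c' hc' hn
      exact Nat.sub_le_sub_right (hf.2.1 c hc c' hc' hn) 1
    · intro c hc hl
      have := hf.2.2 c hc hl
      simp only
      omega
    · funext c
      by_cases hc : c ∈ chords (lsNest l)
      · have := ls_root_le l h _ f hf c hc
        simp only [lsR, hc, if_true]
        omega
      · simp [lsR, hc, hf.1 c hc]

/-- there is a leaf of capacity zero -/
def lsHasLeaf (l : List Bool) : Prop :=
  ∃ c ∈ chords l, (∀ c' ∈ chords l, ¬ NestedIn c' c) ∧ cap l c = 0

theorem ls_leaf_nest (l : List Bool) (h : IsDyckWord l) (hl : l = [] ∨ lsHasLeaf l) :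
    lsHasLeaf (lsNest l) := by
  unfold lsHasLeaf
  rw [ls_chords_nest l h]
  rcases hl with rfl | ⟨c, hc, hl, h0⟩
  · refine ⟨(0, 1), by simp, ?_, by simp [cap]⟩
    intro c' _ hn
    simp [NestedIn] at hn
    omega
  · refine ⟨lsS 1 c, Finset.mem_insert_of_mem (Finset.mem_image_of_mem _ hc), ?_, ?_⟩
    · intro c' hc' hn
      simp only [Finset.mem_insert, Finset.mem_image] at hc'
      rcases hc' with rfl | ⟨d, hd, rfl⟩
      · simp [NestedIn] at hn
      · exact hl d hd ((lsS_nested _ _ _).1 hn)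
    · have := ls_chord_lt hc
      rw [ls_cap_nest _ _ (by omega), h0]

theorem ls_leaf_append (l1 l2 : List Bool) (h : IsDyckWord l1) (hl : lsHasLeaf l1) :
    lsHasLeaf (l1 ++ l2) := by
  unfold lsHasLeaf
  rw [ls_chords_append l1 l2 h]
  obtain ⟨c, hc, hl, h0⟩ := hl
  have := ls_chord_lt hc
  refine ⟨c, Finset.mem_union_left _ hc, ?_, ?_⟩
  · intro c' hc' hn
    simp only [Finset.mem_union, Finset.mem_image] at hc'
    rcases hc' with hc' | ⟨d, hd, rfl⟩
    · exact hl c' hc' hn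
    · simp [NestedIn, lsS] at hn
      omega
  · rw [ls_cap_append_left _ _ _ (by omega), h0]

theorem ls_nest_zero_eq (l : List Bool) (h : IsDyckWord l) (hl : l = [] ∨ lsHasLeaf l) :
    lsLab (lsNest l) 0 = lsLab (lsNest l) 0 ∩ {f | f (0, l.length + 1) = 0} := by
  symm
  rw [Set.inter_eq_left]
  intro f hf
  obtain ⟨c, hc, hl, h0⟩ := ls_leaf_nest l h hl
  have h1 := ls_root_le l h 0 f hf c hc
  have h2 := hf.2.2 c hc hl
  simp only [Set.mem_ofPred_eq]
  omega

theorem ls_finite_nest (l : List Bool) (h : IsDyckWord l) (hl : l = [] ∨ lsHasLeaf l)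
    (f1 : ∀ m, (lsLab l m).Finite) (m : ℕ) : (lsLab (lsNest l) m).Finite := by
  induction m with
  | zero =>
    rw [ls_nest_zero_eq l h hl, ← (ls_bij_zero l h 0).image_eq]
    exact (f1 0).image _
  | succ m ih =>
    rw [← Set.inter_union_compl (lsLab (lsNest l) (m+1)) {f | f (0, l.length + 1) = 0},
      ← (ls_bij_zero l h (m+1)).image_eq, ← (ls_bij_raise l h m).image_eq]
    exact ((f1 _).image _).union (ih.image _)

theorem ls_sum_Z (l : List Bool) (h : IsDyckWord l) (f : (ℕ × ℕ) → ℕ) :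
    ∑ c ∈ chords (lsNest l), lsZ f c = ∑ c ∈ chords l, f c := by
  rw [ls_chords_nest l h, Finset.sum_insert (ls_notMem_nest l),
    Finset.sum_image (fun _ _ _ _ hh => lsS_inj _ hh)]
  have z0 : lsZ f (0, l.length + 1) = 0 := by simp [lsZ, lsE]
  rw [z0, zero_add]
  exact Finset.sum_congr rfl fun c _ => lsE_right _ _ _

theorem lsQ_part (l : List Bool) (h : IsDyckWord l) (m : ℕ) :
    ∑ᶠ f ∈ lsLab (lsNest l) m ∩ {f | f (0, l.length + 1) = 0},
      qq ^ (∑ c ∈ chords (lsNest l), f c) = lsQ l m := by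
  symm
  refine finsum_mem_eq_of_bijOn lsZ (ls_bij_zero l h m) ?_
  intro f _
  rw [ls_sum_Z l h]

theorem lsQ_nest_zero (l : List Bool) (h : IsDyckWord l) (hl : l = [] ∨ lsHasLeaf l) :
    lsQ (lsNest l) 0 = lsQ l 0 := by
  rw [← lsQ_part l h 0, ← ls_nest_zero_eq l h hl]
  rfl

theorem lsQ_nest_succ (l : List Bool) (h : IsDyckWord l) (hl : l = [] ∨ lsHasLeaf l)
    (f1 : ∀ m, (lsLab l m).Finite) (m : ℕ) :
    lsQ (lsNest l) (m + 1) = lsQ l (m + 1) + qq ^ (chords (lsNest l)).card * lsQ (lsNest l) m := by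
  have ff := ls_finite_nest l h hl f1
  conv_lhs =>
    unfold lsQ
    rw [← Set.inter_union_compl (lsLab (lsNest l) (m+1)) {f | f (0, l.length + 1) = 0}]
  rw [finsum_mem_union (by
      exact Set.disjoint_left.2 fun x hx hx' => hx'.2 hx.2) ((ff _).inter_of_left _)
      ((ff _).inter_of_left _), lsQ_part l h]
  congr 1
  unfold lsQ
  rw [finsum_mem_eq_finite_toFinset_sum _ (ff m), Finset.mul_sum,
    ← finsum_mem_eq_finite_toFinset_sum
      (fun f => qq ^ (chords (lsNest l)).card * qq ^ (∑ c ∈ chords (lsNest l), f c)) (ff m)]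
  symm
  refine finsum_mem_eq_of_bijOn _ (ls_bij_raise l h m) ?_
  intro f _
  rw [← pow_add]
  congr 1
  rw [add_comm, Finset.card_eq_sum_ones, ← Finset.sum_add_distrib]
  exact Finset.sum_congr rfl fun c hc => by simp [lsR, hc]

/-! ## q-arithmetic -/

theorem ls_qfact_succ (n : ℕ) : qfact (n + 1) = qfact n * qint (n + 1) := by
  unfold qfact
  rw [Finset.prod_range_succ]

theorem ls_qint_add (a b : ℕ) : qint (a + b) = qint a + qq ^ a * qint b := by
  unfold qint
  rw [Finset.sum_range_add, Finset.mul_sum]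
  simp [pow_add]

theorem ls_qint_ne (n : ℕ) : qint (n + 1) ≠ 0 := by
  have e : qint (n + 1) = algebraMap (Polynomial ℚ) K
      (∑ i ∈ Finset.range (n + 1), Polynomial.X ^ i) := by
    simp [qint, qq, map_sum]
  rw [e]
  intro h
  have h' := (map_eq_zero_iff _ (RatFunc.algebraMap_injective ℚ)).1 h
  have := congrArg (Polynomial.eval 1) h'
  simp [Polynomial.eval_finsetSum] at this
  norm_cast at this

theorem ls_qfact_ne (n : ℕ) : qfact n ≠ 0 := by
  unfold qfact
  exact Finset.prod_ne_zero_iff.2 fun i _ => ls_qint_ne i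

/-- main invariant -/
def lsGood (l : List Bool) : Prop :=
  (chords l).card = l.count false ∧ (∀ m, (lsLab l m).Finite) ∧ (l = [] ∨ lsHasLeaf l) ∧
    ∃ C : K, ∀ m, lsQ l m * qfact m = C * qfact (m + l.count false)

theorem ls_good_nil : lsGood [] := by
  have hc : chords [] = ∅ := by simp [chords]
  have hL : ∀ m, lsLab [] m = {fun _ => 0} := by
    intro m
    ext f
    simp [lsLab, hc, funext_iff]
  refine ⟨by simp [hc], fun m => by simp [hL], Or.inl rfl, 1, fun m => ?_⟩
  simp [lsQ, hL, hc]

theorem ls_good_nest (l : List Bool) (h : IsDyckWord l) (hg : lsGood l) : lsGood (lsNest l) := by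
  obtain ⟨hcard, hfin, hl, C, hC⟩ := hg
  have hcn : (lsNest l).count false = l.count false + 1 := by simp [lsNest]
  refine ⟨by rw [ls_card_nest l h, hcard, hcn], ls_finite_nest l h hl hfin,
    Or.inr (ls_leaf_nest l h hl), C / qint (l.count false + 1), fun m => ?_⟩
  have hne := ls_qint_ne (l.count false)
  rw [hcn, div_mul_eq_mul_div, eq_div_iff hne]
  induction m with
  | zero =>
    rw [lsQ_nest_zero l h hl, hC]
    simp only [zero_add]
    rw [ls_qfact_succ]
    ring
  | succ m ih =>
    rw [lsQ_nest_succ l h hl hfin, ls_card_nest l h, hcard]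
    have h1 := hC (m + 1)
    have e1 : qfact (m + 1 + (l.count false + 1)) =
        qfact (m + (l.count false + 1)) * qint ((l.count false + 1) + (m + 1)) := by
      rw [← add_comm (m + 1), show m + 1 + (l.count false + 1) = (m + (l.count false + 1)) + 1 by ring,
        ls_qfact_succ]
    rw [e1, ls_qint_add (l.count false + 1) (m + 1), show m + (l.count false + 1) = m + 1 + l.count false by ring]
    rw [show m + (l.count false + 1) = m + 1 + l.count false by ring] at ih
    have e2 := ls_qfact_succ m
    rw [add_mul, add_mul, h1, e2]
    linear_combination qq ^ (l.count false + 1) * qint (m + 1) * ih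

theorem ls_good_append (l1 l2 : List Bool) (h : IsDyckWord l1) (hl1 : lsHasLeaf l1)
    (h1 : lsGood l1) (h2 : lsGood l2) : lsGood (l1 ++ l2) := by
  obtain ⟨c1, f1, _, C1, hC1⟩ := h1
  obtain ⟨c2, f2, _, C2, hC2⟩ := h2
  refine ⟨by rw [ls_card_append l1 l2 h, c1, c2, List.count_append],
    ls_finite_append l1 l2 h f1 f2, Or.inr (ls_leaf_append l1 l2 h hl1), C1 * C2, fun m => ?_⟩
  have a := hC1 m
  have b := hC2 (m + l1.count false)
  rw [lsQ_append l1 l2 h f1 f2, List.count_append, ← add_assoc]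
  linear_combination lsQ l2 (m + l1.count false) * a + C1 * b

theorem ls_good (l : List Bool) (h : IsDyckWord l) : lsGood l := by
  refine ls_dyck_induction lsGood ls_good_nil ?_ l h
  intro l1 l2 h1 h2 g1 g2
  exact ls_good_append _ _ (ls_nest_dyck l1 h1) (ls_leaf_nest l1 h1 g1.2.2.1)
    (ls_good_nest l1 h1 g1) g2

theorem ls_count (l : List Bool) (h : IsDyckWord l) (n : ℕ) (hn : l.length = 2 * n) :
    l.count false = n := by
  have h1 := h.1
  have h2 := List.count_true_add_count_false l
  omega

/-- Paper's Lemma `treefac`: P_{λ₁λ₂} = [n₁+n₂ choose n₁] · P_{λ₁} · P_{λ₂}. -/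
theorem stmt_10 (n1 n2 : ℕ) (l1 l2 : List Bool)
    (h1 : IsDyckWord l1) (h2 : IsDyckWord l2)
    (hl1 : l1.length = 2 * n1) (hl2 : l2.length = 2 * n2) :
    PLSK (l1 ++ l2) = qbinom (n1 + n2) n1 * PLSK l1 * PLSK l2 := by
  obtain ⟨_, f1, _, _⟩ := ls_good l1 h1
  obtain ⟨_, f2, _, C, hC⟩ := ls_good l2 h2
  rw [lsQ_zero, lsQ_zero, lsQ_zero, lsQ_append l1 l2 h1 f1 f2]
  have a := hC 0
  have b := hC n1
  rw [ls_count l1 h1 n1 hl1, zero_add]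
  rw [ls_count l2 h2 n2 hl2] at a b
  have e0 : qfact 0 = 1 := by simp [qfact]
  rw [e0, mul_one, zero_add] at a
  rw [a]
  unfold qbinom
  rw [if_pos (by omega), Nat.add_sub_cancel_left]
  have n1' := ls_qfact_ne n1
  have n2' := ls_qfact_ne n2
  have b' : lsQ l2 n1 = C * qfact (n1 + n2) / qfact n1 := by
    rw [eq_div_iff n1', b]
  rw [b']
  field_simp
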